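/- arXiv:2109.13721 — 7 statements merged into one kernel-verified Lean document; each statement's English description precedes it below -/
import Mathlib

section
/- Let (M,d) be a metric space and let f, g : M → ℝ be two real-valued functions such that |∇f|(x) > |∇g|(x) for every x ∈ M \ Crit(f). Then for every x ∈ M \ Crit(f) there exists z ∈ M such that f(x) − g(x) > f(z) − g(z) and f(x) > f(z). -/
open Filter Topology
open scoped ENNReal Classical

/-- The metric slope of `f : M → ℝ` at `x`: it is `0` if `x` is an isolated point of `M`,
and otherwise `limsup_{y → x, y ≠ x} (f x - f y)⁺ / d(x,y)`, with values in `[0, +∞]`. -/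
noncomputable def metricSlope {M : Type*} [MetricSpace M] (f : M → ℝ) (x : M) : ℝ≥0∞ :=
  if 𝓝[≠] x = ⊥ then 0
  else Filter.limsup (fun y => ENNReal.ofReal (max (f x - f y) 0 / dist x y)) (𝓝[≠] x)

/-- Key lemma: if `|∇f| > |∇g|` off the critical set of `f`, then from every non-critical
point `x` of `f` there is `z` with `(f-g)(x) > (f-g)(z)` and `f(x) > f(z)`. -/
theorem key_lemma {M : Type*} [MetricSpace M] (f g : M → ℝ)
    (h : ∀ x : M, metricSlope f x ≠ 0 → metricSlope g x < metricSlope f x) :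
    ∀ x : M, metricSlope f x ≠ 0 →
      ∃ z : M, f x - g x > f z - g z ∧ f x > f z := by
  intro x hx
  have hlt := h x hx
  have hne : ¬ (𝓝[≠] x = ⊥) := by
    intro hb
    exact hx (by simp [metricSlope, hb])
  unfold metricSlope at hlt
  rw [if_neg hne, if_neg hne] at hlt
  obtain ⟨c, hc1, hc2⟩ := exists_between hlt
  have hg := Filter.eventually_lt_of_limsup_lt hc1
  have hf := Filter.frequently_lt_of_lt_limsup (by isBoundedDefault) hc2
  obtain ⟨z, hz1, hz2, hz3⟩ := (hf.and_eventually (hg.and self_mem_nhdsWithin)).exists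
  have hd : 0 < dist x z := dist_pos.mpr (Ne.symm hz3)
  have hq := (ENNReal.ofReal_lt_ofReal_iff'.mp (hz2.trans hz1)).1
  have hm : max (g x - g z) 0 < max (f x - f z) 0 := (div_lt_div_iff_of_pos_right hd).mp hq
  have h1 := le_max_left (g x - g z) 0
  have h0 := le_max_right (g x - g z) 0
  rcases lt_max_iff.mp hm with h2 | h2
  · exact ⟨z, by linarith, by linarith⟩
  · linarith
end

section
/- Let (M,d) be a metric space, τ a topology on M, and f, g : M → ℝ two τ-continuous and τ-coercive functions. Assume (i) |∇g|(x) ≤ |∇f|(x) < +∞ for all x ∈ M, and (ii) there exists c ∈ ℝ such that g(x) − f(x) ≤ c for all x ∈ Crit(f). Then g(x) ≤ f(x) + c for all x ∈ M. -/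
open Filter Topology
open scoped ENNReal Classical

/-- `f` is `τ`-coercive: the sublevel set `[f ≤ α]` is `τ`-compact for every `α < sup f`
(the condition `α < sup_{x ∈ M} f x`, with the supremum in the extended reals, is
expressed as `∃ y, α < f y`). -/
def IsSublevelCoercive {M : Type*} (τ : TopologicalSpace M) (f : M → ℝ) : Prop :=
  ∀ α : ℝ, (∃ y, α < f y) → @IsCompact M τ {x | f x ≤ α}

theorem descent_aux {M : Type*} [MetricSpace M] (f g : M → ℝ) (x : M)
    (h1 : metricSlope g x ≤ metricSlope f x) (h2 : metricSlope f x < ⊤)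
    (h0 : metricSlope f x ≠ 0) (l : ℝ) (hl0 : 0 < l) (hl1 : l < 1) :
    ∃ y, f y < f x ∧ l * g x - f x < l * g y - f y := by
  obtain ⟨a, ha⟩ : ∃ a, a = (metricSlope f x).toReal := ⟨_, rfl⟩
  have hapos : 0 < a := ha ▸ ENNReal.toReal_pos h0 h2.ne
  have hfa : metricSlope f x = ENNReal.ofReal a := by
    rw [ha, ENNReal.ofReal_toReal h2.ne]
  obtain ⟨r, hr1, hr2⟩ : ∃ r, l * a < r ∧ r < a := exists_between (by nlinarith)
  have hr0 : 0 < r := lt_trans (by positivity) hr1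
  have hb : 𝓝[≠] x ≠ ⊥ := by
    intro hb
    apply h0
    simp [metricSlope, hb]
  have hg : metricSlope g x < ENNReal.ofReal (r / l) := by
    refine h1.trans_lt ?_
    rw [hfa]
    refine (ENNReal.ofReal_lt_ofReal_iff (by positivity)).2 ?_
    rw [lt_div_iff₀ hl0]
    linarith
  have hf : ENNReal.ofReal r < metricSlope f x := by
    rw [hfa]
    exact (ENNReal.ofReal_lt_ofReal_iff hapos).2 hr2
  simp only [metricSlope, if_neg hb] at hg hf
  have hF := frequently_lt_of_lt_limsup (by isBoundedDefault) hf
  have hG := eventually_lt_of_limsup_lt hg (by isBoundedDefault)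
  have hne : ∀ᶠ y in 𝓝[≠] x, y ≠ x := self_mem_nhdsWithin
  obtain ⟨y, hy1, hy2, hy3⟩ := (hF.and_eventually (hG.and hne)).exists
  have hd : 0 < dist x y := dist_pos.2 hy3.symm
  have k1 := (ENNReal.ofReal_lt_ofReal_iff_of_nonneg hr0.le).1 hy1
  have k2 := (ENNReal.ofReal_lt_ofReal_iff (by positivity)).1 hy2
  rw [lt_div_iff₀ hd] at k1
  rw [div_lt_div_iff₀ hd hl0] at k2
  have hrd : 0 < r * dist x y := by positivity
  have k3 : r * dist x y < f x - f y := by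
    rcases lt_max_iff.1 k1 with h | h
    · exact h
    · linarith
  have k4 : (g x - g y) * l ≤ max (g x - g y) 0 * l :=
    mul_le_mul_of_nonneg_right (le_max_left _ _) hl0.le
  exact ⟨y, by linarith, by nlinarith⟩

theorem limit_aux (p q c B : ℝ)
    (h : ∀ l : ℝ, 0 < l → l < 1 → l * p - q ≤ c + (1 - l) * B) : p ≤ q + c := by
  have hT : Tendsto (fun l : ℝ => c + (1 - l) * B - (l * p - q)) (𝓝[<] 1)
      (𝓝 (c + (1 - 1) * B - (1 * p - q))) :=
    Continuous.tendsto (by fun_prop) 1 |>.mono_left nhdsWithin_le_nhds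
  have hev : ∀ᶠ l : ℝ in 𝓝[<] 1, 0 ≤ c + (1 - l) * B - (l * p - q) := by
    filter_upwards [Ioo_mem_nhdsLT (show (0 : ℝ) < 1 by norm_num)] with l hl
    linarith [h l hl.1 hl.2]
  have := ge_of_tendsto hT hev
  linarith

/-- Comparison principle: if `|∇g| ≤ |∇f| < +∞` everywhere and `g - f ≤ c` on `Crit f`,
then `g ≤ f + c` everywhere, for τ-continuous τ-coercive `f, g`. -/
theorem comparison_principle {M : Type*} [MetricSpace M]
    (τ : TopologicalSpace M) (f g : M → ℝ)
    (hf_cont : @Continuous M ℝ τ _ f) (hg_cont : @Continuous M ℝ τ _ g)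
    (hf_coer : IsSublevelCoercive τ f) (hg_coer : IsSublevelCoercive τ g)
    (h1 : ∀ x : M, metricSlope g x ≤ metricSlope f x)
    (h2 : ∀ x : M, metricSlope f x < ⊤)
    (c : ℝ) (hc : ∀ x : M, metricSlope f x = 0 → g x - f x ≤ c) :
    ∀ x : M, g x ≤ f x + c := by
  have key : ∀ x : M, (∃ y, f x < f y) → g x ≤ f x + c := by
    intro x hx
    have hK := hf_coer (f x) hx
    have hxK : x ∈ {z | f z ≤ f x} := le_refl (f x)
    obtain ⟨m, -, hm⟩ := @IsCompact.exists_isMinOn ℝ M _ _ τ _ _ hK ⟨x, hxK⟩ g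
      (@Continuous.continuousOn M ℝ τ _ _ _ hg_cont)
    refine limit_aux (g x) (f x) c (- g m) fun l hl0 hl1 => ?_
    have hcont : @Continuous M ℝ τ _ (fun z => l * g z - f z) :=
      @Continuous.sub ℝ M τ _ _ _ _ _ (@Continuous.comp M ℝ ℝ τ _ _ _ _ (continuous_const_mul l) hg_cont) hf_cont
    obtain ⟨z, hz, hmax⟩ := @IsCompact.exists_isMaxOn ℝ M _ _ τ _ _ hK ⟨x, hxK⟩ _
      (@Continuous.continuousOn M ℝ τ _ _ _ hcont)
    have hzc : metricSlope f z = 0 := by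
      by_contra h0
      obtain ⟨y, hy1, hy2⟩ := descent_aux f g z (h1 z) (h2 z) h0 l hl0 hl1
      have hyK : y ∈ {z | f z ≤ f x} := hy1.le.trans hz
      have : l * g y - f y ≤ l * g z - f z := hmax hyK
      linarith
    have e1 : l * g x - f x ≤ l * g z - f z := hmax hxK
    have e2 : g m ≤ g z := hm hz
    have e3 := hc z hzc
    nlinarith
  intro x
  by_cases hx : ∃ y, f x < f y
  · exact key x hx
  push Not at hx
  by_cases h0 : metricSlope f x = 0
  · linarith [hc x h0]
  obtain ⟨y0, hy0, -⟩ := descent_aux f g x (h1 x) (h2 x) h0 (1/2) (by norm_num) (by norm_num)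
  obtain ⟨m, hmK, hm⟩ := @IsCompact.exists_isMinOn ℝ M _ _ τ _ _ (hf_coer (f y0) ⟨x, hy0⟩)
    ⟨y0, le_refl (f y0)⟩ f (@Continuous.continuousOn M ℝ τ _ _ _ hf_cont)
  have hmin : ∀ y, f m ≤ f y := by
    intro y
    rcases le_total (f y) (f y0) with h | h
    · exact hm h
    · exact le_trans hmK h
  refine limit_aux (g x) (f x) c (- c - f m) fun l hl0 hl1 => ?_
  obtain ⟨y, hy1, hy2⟩ := descent_aux f g x (h1 x) (h2 x) h0 l hl0 hl1
  have e1 := key y ⟨x, hy1⟩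
  have e2 := hmin y
  nlinarith
end

section
/- Let (M,d) be a metric space, τ a topology on M, and f, g : M → ℝ two τ-continuous and τ-coercive functions such that (i) |∇f|(x) = |∇g|(x) < +∞ for every x ∈ M, and (ii) there exists c ∈ ℝ such that g(x) − f(x) = c for all x ∈ Crit(f). Then g = f + c on all of M. -/
open Filter Topology
open scoped ENNReal Classical

theorem exists_min_aux {X : Type*} [TopologicalSpace X] {K : Set X} (hK : IsCompact K)
    (hne : K.Nonempty) {f : X → ℝ} (hf : Continuous f) : ∃ z ∈ K, ∀ w ∈ K, f z ≤ f w :=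
  hK.exists_isMinOn hne hf.continuousOn

theorem exists_max_aux {X : Type*} [TopologicalSpace X] {K : Set X} (hK : IsCompact K)
    (hne : K.Nonempty) {f g : X → ℝ} (hf : Continuous f) (hg : Continuous g) (r : ℝ) :
    ∃ z ∈ K, ∀ w ∈ K, g w - r * f w ≤ g z - r * f z :=
  hK.exists_isMaxOn hne (f := fun z => g z - r * f z) (by fun_prop)

theorem slope_step {M : Type*} [MetricSpace M] (f g : M → ℝ) (x : M) (ε : ℝ) (hε : 0 < ε)
    (h1 : metricSlope g x = metricSlope f x) (h2 : metricSlope f x < ⊤)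
    (h0 : metricSlope f x ≠ 0) :
    ∃ y, f y < f x ∧ g x - g y < (1 + ε) * (f x - f y) := by
  have hne : 𝓝[≠] x ≠ ⊥ := by
    intro h
    exact h0 (by simp [metricSlope, h])
  obtain ⟨s, hs⟩ : ∃ s : ℝ, s = (metricSlope f x).toReal := ⟨_, rfl⟩
  have hs0 : 0 < s := hs ▸ ENNReal.toReal_pos h0 h2.ne
  have hfs : metricSlope f x = ENNReal.ofReal s := by rw [hs, ENNReal.ofReal_toReal h2.ne]
  obtain ⟨a, ha1, ha2⟩ : ∃ a, s / (1 + ε) < a ∧ a < s :=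
    exists_between (div_lt_self hs0 (by linarith))
  have ha0 : 0 < a := lt_trans (by positivity) ha1
  have hb : s < (1 + ε) * a := by
    rw [div_lt_iff₀ (by linarith)] at ha1; linarith
  have hF : ENNReal.ofReal a <
      Filter.limsup (fun y => ENNReal.ofReal (max (f x - f y) 0 / dist x y)) (𝓝[≠] x) := by
    have := hfs
    rw [metricSlope, if_neg hne] at this
    rw [this]
    exact (ENNReal.ofReal_lt_ofReal_iff hs0).2 ha2
  have hG : Filter.limsup (fun y => ENNReal.ofReal (max (g x - g y) 0 / dist x y)) (𝓝[≠] x)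
      < ENNReal.ofReal ((1 + ε) * a) := by
    have := h1.trans hfs
    rw [metricSlope, if_neg hne] at this
    rw [this]
    exact (ENNReal.ofReal_lt_ofReal_iff (by positivity)).2 hb
  have e1 := Filter.frequently_lt_of_lt_limsup (by isBoundedDefault) hF
  have e2 := Filter.eventually_lt_of_limsup_lt hG
  have e3 : ∀ᶠ y in 𝓝[≠] x, y ≠ x := self_mem_nhdsWithin
  obtain ⟨y, hy1, hy2, hy3⟩ := (e1.and_eventually (e2.and e3)).exists
  have hd : 0 < dist x y := dist_pos.2 (Ne.symm hy3)
  have k1 := (ENNReal.ofReal_lt_ofReal_iff'.1 hy1).1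
  have k2 := (ENNReal.ofReal_lt_ofReal_iff'.1 hy2).1
  rw [lt_div_iff₀ hd] at k1
  rw [div_lt_iff₀ hd] at k2
  have hpos : 0 < a * dist x y := by positivity
  have k3 : a * dist x y < f x - f y := by
    rcases lt_max_iff.1 k1 with h | h
    · exact h
    · linarith
  refine ⟨y, by linarith, ?_⟩
  have k4 := le_max_left (g x - g y) 0
  have k5 : (1 + ε) * (a * dist x y) < (1 + ε) * (f x - f y) :=
    mul_lt_mul_of_pos_left k3 (by linarith)
  linarith

theorem determination_half {M : Type*} [MetricSpace M]
    (τ : TopologicalSpace M) (f g : M → ℝ)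
    (hf_cont : @Continuous M ℝ τ _ f) (hg_cont : @Continuous M ℝ τ _ g)
    (hf_coer : IsSublevelCoercive τ f)
    (h1 : ∀ x : M, metricSlope g x = metricSlope f x)
    (h2 : ∀ x : M, metricSlope f x < ⊤)
    (c : ℝ) (hc : ∀ x : M, metricSlope f x = 0 → g x - f x = c) (x : M) :
    g x - f x ≤ c := by
  by_cases h0 : metricSlope f x = 0
  · exact (hc x h0).le
  obtain ⟨y0, hy0, -⟩ := slope_step f g x 1 one_pos (h1 x) (h2 x) h0
  obtain ⟨m, hm, hm'⟩ : ∃ m, m ≤ f y0 ∧ ∀ z, m ≤ f z := by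
    obtain ⟨z, hz, hz'⟩ := @exists_min_aux M τ _
      (hf_coer (f y0) ⟨x, hy0⟩) ⟨y0, le_refl (f y0)⟩ f hf_cont
    refine ⟨f z, hz, fun w => ?_⟩
    rcases le_total (f w) (f y0) with h | h
    · exact hz' w h
    · exact le_trans hz h
  have key : ∀ ε : ℝ, 0 < ε → g x - f x - c ≤ ε * (f x - m) := by
    intro ε hε
    obtain ⟨y, hy, hy'⟩ := slope_step f g x ε hε (h1 x) (h2 x) h0
    obtain ⟨z, hz, hz'⟩ := @exists_max_aux M τ _
      (hf_coer (f y) ⟨x, hy⟩) ⟨y, le_refl (f y)⟩ f g hf_cont hg_cont (1 + ε)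
    have hzy : g y - (1 + ε) * f y ≤ g z - (1 + ε) * f z := hz' _ (le_refl (f y))
    have hz0 : metricSlope f z = 0 := by
      by_contra hne
      obtain ⟨w, hw, hw'⟩ := slope_step f g z ε hε (h1 z) (h2 z) hne
      have : g w - (1 + ε) * f w ≤ g z - (1 + ε) * f z := hz' _ (le_trans hw.le hz)
      linarith
    have := hc z hz0
    have := mul_le_mul_of_nonneg_left (hm' z) hε.le
    linarith
  have hD : 0 < f x - m := by linarith
  by_contra! hlt
  have := key ((g x - f x - c) / (2 * (f x - m))) (div_pos (by linarith) (by linarith))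
  have e : (g x - f x - c) / (2 * (f x - m)) * (f x - m) = (g x - f x - c) / 2 := by
    field_simp
  linarith

/-- Determination theorem: if `|∇f| = |∇g| < +∞` everywhere and `g - f = c` on `Crit f`,
then `g = f + c`, for τ-continuous τ-coercive `f, g`. -/
theorem determination_theorem {M : Type*} [MetricSpace M]
    (τ : TopologicalSpace M) (f g : M → ℝ)
    (hf_cont : @Continuous M ℝ τ _ f) (hg_cont : @Continuous M ℝ τ _ g)
    (hf_coer : IsSublevelCoercive τ f) (hg_coer : IsSublevelCoercive τ g)
    (h1 : ∀ x : M, metricSlope f x = metricSlope g x)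
    (h2 : ∀ x : M, metricSlope f x < ⊤)
    (c : ℝ) (hc : ∀ x : M, metricSlope f x = 0 → g x - f x = c) :
    ∀ x : M, g x = f x + c := by
  intro x
  have a := determination_half τ f g hf_cont hg_cont hf_coer (fun x => (h1 x).symm) h2 c hc x
  have b := determination_half τ g f hg_cont hf_cont hg_coer h1 (fun x => h1 x ▸ h2 x) (-c)
    (fun x hx => by linarith [hc x ((h1 x).trans hx)]) x
  linarith
end

section
/- Let X be a Banach space and let f, g : X → ℝ be two convex, continuous functions that are bounded from below, such that |∇f|(x) = |∇g|(x) for every x ∈ X. Then there exists c ∈ ℝ such that f = g + c. -/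
open Filter Topology
open scoped ENNReal Classical

lemma slope_ge {X : Type*} [NormedAddCommGroup X] [NormedSpace ℝ X] (f : X → ℝ)
    (hf : ConvexOn ℝ Set.univ f) {x z : X} (hxz : x ≠ z) :
    ENNReal.ofReal ((f x - f z) / dist x z) ≤ metricSlope f x := by
  have hd : 0 < dist x z := dist_pos.2 hxz
  have hlim : Tendsto (fun t : ℝ => x + t • (z - x)) (𝓝[>] 0) (𝓝[≠] x) := by
    apply tendsto_nhdsWithin_of_tendsto_nhds_of_eventually_within
    · have : Continuous (fun t : ℝ => x + t • (z - x)) := by fun_prop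
      have h0 := this.tendsto 0
      simp only [zero_smul, add_zero] at h0
      exact h0.mono_left nhdsWithin_le_nhds
    · filter_upwards [self_mem_nhdsWithin] with t ht
      have ht : (0 : ℝ) < t := ht
      simp [sub_eq_zero, ht.ne', hxz.symm]
  have hne : (𝓝[≠] x).NeBot := hlim.neBot
  unfold metricSlope
  rw [if_neg hne.ne]
  apply le_limsup_of_frequently_le
  · apply hlim.frequently
    apply Eventually.frequently
    have h1 : ∀ᶠ t : ℝ in 𝓝[>] 0, t < 1 := nhdsWithin_le_nhds (Iio_mem_nhds one_pos)
    filter_upwards [self_mem_nhdsWithin, h1] with t ht ht1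
    have ht : (0 : ℝ) < t := ht
    apply ENNReal.ofReal_le_ofReal
    have hc := hf.2 (Set.mem_univ x) (Set.mem_univ z)
      (by linarith : 0 ≤ 1 - t) ht.le (by ring)
    have he : (1 - t) • x + t • z = x + t • (z - x) := by
      rw [sub_smul, smul_sub, one_smul]; abel
    rw [he] at hc
    simp only [smul_eq_mul] at hc
    have hdd : dist x (x + t • (z - x)) = t * dist x z := by
      rw [dist_eq_norm, dist_comm x z, dist_eq_norm]
      simp [norm_smul, abs_of_pos ht]
    rw [hdd]
    rw [div_le_div_iff₀ hd (by positivity)]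
    have : t * (f x - f z) ≤ max (f x - f (x + t • (z - x))) 0 :=
      le_max_of_le_left (by linarith)
    nlinarith
  · isBoundedDefault

lemma slope_finite {X : Type*} [NormedAddCommGroup X] [NormedSpace ℝ X] (f : X → ℝ)
    (hf : ConvexOn ℝ Set.univ f) (hc : Continuous f) (x : X) : metricSlope f x ≠ ⊤ := by
  unfold metricSlope
  split_ifs with hb
  · simp
  have hL := (hf.locallyLipschitzOn_iff_continuousOn isOpen_univ).2 hc.continuousOn
  obtain ⟨K, t, ht, hK⟩ := hL (Set.mem_univ x)
  rw [nhdsWithin_univ] at ht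
  have hxt := mem_of_mem_nhds ht
  refine ne_top_of_le_ne_top (b := ENNReal.ofReal K) ENNReal.ofReal_ne_top ?_
  apply limsup_le_of_le (by isBoundedDefault)
  filter_upwards [nhdsWithin_le_nhds ht, self_mem_nhdsWithin] with z hz hzx
  apply ENNReal.ofReal_le_ofReal
  have hd : 0 < dist x z := dist_pos.2 (Ne.symm hzx)
  rw [div_le_iff₀ hd]
  apply max_le
  · have := hK.dist_le_mul x hxt z hz
    rw [Real.dist_eq] at this
    exact (le_abs_self _).trans this
  · positivity

lemma slope_step_s7 {M : Type*} [MetricSpace M] (f : M → ℝ) (x : M) (κ : ℝ) (hκ : 0 ≤ κ)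
    (h : ENNReal.ofReal κ < metricSlope f x) : ∃ z, z ≠ x ∧ κ * dist x z < f x - f z := by
  unfold metricSlope at h
  split_ifs at h with hb
  · simp at h
  have h1 := frequently_lt_of_lt_limsup (by isBoundedDefault) h
  obtain ⟨z, hz, hzx⟩ := (h1.and_eventually self_mem_nhdsWithin).exists
  have hzx : z ≠ x := hzx
  have hd : 0 < dist x z := dist_pos.2 hzx.symm
  refine ⟨z, hzx, ?_⟩
  have h2 := (ENNReal.ofReal_lt_ofReal_iff_of_nonneg hκ).1 hz
  rw [lt_div_iff₀ hd] at h2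
  rcases lt_max_iff.1 h2 with h3 | h3
  · exact h3
  · have : 0 ≤ κ * dist x z := by positivity
    linarith

lemma combined_step {X : Type*} [NormedAddCommGroup X] [NormedSpace ℝ X] (f g : X → ℝ)
    (hg : ConvexOn ℝ Set.univ g) (hc : Continuous g) (x y : X)
    (h : metricSlope f x = metricSlope g x) (l : ℝ) (hl : 1 < l) (hy : g y < g x) :
    ∃ z, z ≠ x ∧ g x - g z ≤ l * (f x - f z) ∧
      (g x - g y) / dist x y * dist x z ≤ l * (f x - f z) := by
  have hfin := slope_finite g hg hc x
  have key : ∀ z, x ≠ z → (g x - g z) / dist x z ≤ (metricSlope g x).toReal := fun z hz =>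
    (ENNReal.ofReal_le_iff_le_toReal hfin).1 (slope_ge g hg hz)
  have hxy : x ≠ y := by rintro rfl; exact lt_irrefl _ hy
  have hd : 0 < dist x y := dist_pos.2 hxy
  set s := (metricSlope g x).toReal with hs
  have hs0 : 0 < s := lt_of_lt_of_le (div_pos (by linarith) hd) (key y hxy)
  have hlt : ENNReal.ofReal (s / l) < metricSlope f x := by
    rw [h, ENNReal.ofReal_lt_iff_lt_toReal (by positivity) hfin]
    exact div_lt_self hs0 hl
  obtain ⟨z, hzx, hz⟩ := slope_step_s7 f x (s / l) (by positivity) hlt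
  have hdz : 0 < dist x z := dist_pos.2 hzx.symm
  have hz' : s * dist x z ≤ l * (f x - f z) := by
    have := mul_le_mul_of_nonneg_left hz.le (by linarith : 0 ≤ l)
    rwa [← mul_assoc, mul_div_cancel₀ _ (by linarith : l ≠ 0)] at this
  refine ⟨z, hzx, ?_, ?_⟩
  · have := key z hzx.symm
    rw [div_le_iff₀ hdz] at this
    linarith
  · exact (mul_le_mul_of_nonneg_right (key y hxy) hdz.le).trans hz'

lemma ekeland_mul {M : Type*} [MetricSpace M] [CompleteSpace M] (A : Set M) (hA : IsClosed A)
    (x0 y : M) (hx0 : x0 ∈ A) (E : M → ℝ) (hE : Continuous E) (e0 : ℝ)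
    (he0 : 0 < e0) (hEe : ∀ x, e0 ≤ E x) :
    ∃ p ∈ A, ∀ z ∈ A, E z * (dist p y + dist p z) ≤ E p * dist p y → z = p := by
  have hEp : ∀ x, 0 < E x := fun x => he0.trans_le (hEe x)
  let S : M → Set M := fun x => {z | z ∈ A ∧ E z * (dist x y + dist x z) ≤ E x * dist x y}
  have trans : ∀ x z w, z ∈ S x → w ∈ S z → w ∈ S x := by
    rintro x z w ⟨_, hz⟩ ⟨hw, hw'⟩
    refine ⟨hw, ?_⟩
    have t1 := dist_triangle x z w
    have t2 := dist_triangle z x y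
    rw [dist_comm z x] at t2
    have t3 := dist_triangle x z y
    -- `E w (r z + b) ≤ E z r z`, `E z (r x + a) ≤ E x r x`, `r z ≤ r x + a`
    have hwz : E w ≤ E z ∨ dist z y = 0 := by
      by_contra hcon
      push Not at hcon
      have : 0 < dist z y := lt_of_le_of_ne dist_nonneg (Ne.symm hcon.2)
      nlinarith [hEp w, hEp z, dist_nonneg (x := z) (y := w)]
    rcases hwz with hwz | hz0
    · have e1 : E w * (dist x y + dist x w) ≤ E w * (dist x y + dist x z + dist z w) :=
        mul_le_mul_of_nonneg_left (by linarith) (hEp w).le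
      nlinarith [mul_nonneg (sub_nonneg.2 hwz) (sub_nonneg.2 t2)]
    · rw [hz0] at hw'
      have : dist z w = 0 := by
        have := hEp w
        have h0 := dist_nonneg (x := z) (y := w)
        nlinarith
      rw [dist_eq_zero] at this
      subst this
      exact hz
  have refl : ∀ x ∈ A, x ∈ S x := fun x hx => ⟨hx, by simp⟩
  have nxt : ∀ (n : ℕ) (x : M), ∃ w, x ∈ A → w ∈ S x ∧ ∀ z ∈ S x, E w ≤ E z + (1/2)^n := by
    intro n x
    by_cases hx : x ∈ A
    · have hne : (E '' S x).Nonempty := ⟨_, x, refl x hx, rfl⟩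
      have hbd : BddBelow (E '' S x) := ⟨e0, by rintro _ ⟨z, _, rfl⟩; exact hEe z⟩
      obtain ⟨_, ⟨w, hw, rfl⟩, hlt⟩ := exists_lt_of_csInf_lt hne
        (lt_add_of_pos_right (sInf (E '' S x)) (by positivity : (0:ℝ) < (1/2)^n))
      refine ⟨w, fun _ => ⟨hw, fun z hz => ?_⟩⟩
      have := csInf_le hbd ⟨z, hz, rfl⟩
      linarith
    · exact ⟨x, fun h => absurd h hx⟩
  choose nx hnx using nxt
  let u : ℕ → M := fun n => Nat.rec x0 (fun n x => nx n x) n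
  have hus : ∀ n, u (n + 1) = nx n (u n) := fun n => rfl
  have huA : ∀ n, u n ∈ A := by
    intro n
    induction n with
    | zero => exact hx0
    | succ n ih => rw [hus]; exact (hnx n _ ih).1.1
  have hmono : ∀ n m, n ≤ m → u m ∈ S (u n) := by
    intro n m hnm
    induction m, hnm using Nat.le_induction with
    | base => exact refl _ (huA n)
    | succ m _ ih => exact trans _ _ _ ih (hus m ▸ (hnx m _ (huA m)).1)
  set R := E (u 0) * dist (u 0) y / e0 with hR
  have hr : ∀ m, dist (u m) y ≤ R := by
    intro m
    have h1 := (hmono 0 m (Nat.zero_le _)).2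
    have t := dist_triangle (u m) (u 0) y
    rw [dist_comm (u m) (u 0)] at t
    rw [hR, le_div_iff₀ he0]
    have h2 := mul_le_mul_of_nonneg_left t (hEp (u m)).le
    have h3 := mul_le_mul_of_nonneg_right (hEe (u m)) (dist_nonneg (x := u m) (y := y))
    linarith
  have hR0 : 0 ≤ R := dist_nonneg.trans (hr 0)
  have hanti' : ∀ n m, n ≤ m → E (u m) ≤ E (u n) := by
    intro n m hnm
    have h1 := (hmono n m hnm).2
    rcases (dist_nonneg (x := u n) (y := y)).eq_or_lt with h0 | h0
    · rw [← h0] at h1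
      have : dist (u n) (u m) = 0 := by
        have := hEp (u m)
        have h0 := dist_nonneg (x := u n) (y := u m)
        nlinarith
      rw [dist_eq_zero] at this
      rw [this]
    · by_contra hcon
      push Not at hcon
      nlinarith [hEp (u m), dist_nonneg (x := u n) (y := u m)]
  have hdist : ∀ n m, n ≤ m → dist (u n) (u m) ≤ R / e0 * (E (u n) - E (u m)) := by
    intro n m hnm
    have h1 := (hmono n m hnm).2
    have h2 := hanti' n m hnm
    rw [div_mul_eq_mul_div, le_div_iff₀ he0]
    have h3 := mul_le_mul_of_nonneg_right (hEe (u m)) (dist_nonneg (x := u n) (y := u m))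
    have h4 := mul_le_mul_of_nonneg_right (hr n) (sub_nonneg.2 h2)
    linarith
  have hanti : Antitone (fun n => E (u n)) := fun n m h => hanti' n m h
  have hbd : BddBelow (Set.range fun n => E (u n)) := ⟨e0, by rintro _ ⟨n, rfl⟩; exact hEe _⟩
  have hL := tendsto_atTop_ciInf hanti hbd
  set L := ⨅ n, E (u n) with hLdef
  have hcau : CauchySeq u := by
    apply cauchySeq_of_le_tendsto_0' (fun n => R / e0 * (E (u n) - L))
    · intro n m hnm
      refine (hdist n m hnm).trans (mul_le_mul_of_nonneg_left ?_ (by positivity))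
      have : L ≤ E (u m) := ciInf_le hbd m
      linarith
    · have := (hL.sub_const L).const_mul (R / e0)
      simpa using this
  obtain ⟨p, hp⟩ := cauchySeq_tendsto_of_complete hcau
  have hpA : p ∈ A := hA.mem_of_tendsto hp (Eventually.of_forall huA)
  have hpS : ∀ n, p ∈ S (u n) := by
    intro n
    refine ⟨hpA, ?_⟩
    have hcl : Tendsto (fun m => E (u m) * (dist (u n) y + dist (u n) (u m))) atTop
        (𝓝 (E p * (dist (u n) y + dist (u n) p))) :=
      ((hE.tendsto p).comp hp).mul ((tendsto_const_nhds.dist hp).const_add _)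
    apply le_of_tendsto hcl
    filter_upwards [eventually_ge_atTop n] with m hm
    exact (hmono n m hm).2
  refine ⟨p, hpA, fun z hz hle => ?_⟩
  have hle2 : E p ≤ E z := by
    have h1 : Tendsto (fun n => E (u (n + 1))) atTop (𝓝 (E p)) :=
      ((hE.tendsto p).comp hp).comp (tendsto_add_atTop_nat 1)
    have h2 : Tendsto (fun n : ℕ => E z + (1/2 : ℝ)^n) atTop (𝓝 (E z + 0)) :=
      (tendsto_pow_atTop_nhds_zero_of_lt_one (by norm_num) (by norm_num)).const_add _
    rw [add_zero] at h2
    refine le_of_tendsto_of_tendsto' h1 h2 fun n => ?_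
    rw [hus]
    exact (hnx n _ (huA n)).2 z (trans _ _ _ (hpS n) ⟨hz, hle⟩)
  have h3 := mul_le_mul_of_nonneg_right hle2 (dist_nonneg (x := p) (y := y))
  have h4 : E z * dist p z ≤ 0 := by linarith
  have h5 : dist p z ≤ 0 := by
    by_contra hcon
    push Not at hcon
    have := mul_pos (hEp z) hcon
    linarith
  exact (dist_le_zero.1 h5).symm

lemma main_ineq {X : Type*} [NormedAddCommGroup X] [NormedSpace ℝ X] [CompleteSpace X]
    (f g : X → ℝ) (hg : ConvexOn ℝ Set.univ g) (hfc : Continuous f) (hgc : Continuous g)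
    (h : ∀ x : X, metricSlope f x = metricSlope g x) (m : ℝ) (hm : ∀ x, m ≤ f x)
    (l : ℝ) (hl : 1 < l) (x0 y : X) : g x0 - g y ≤ l * (f x0 - m) := by
  by_contra hcon
  push Not at hcon
  obtain ⟨δ, hδ⟩ : ∃ δ, δ = g x0 - g y - l * (f x0 - m) := ⟨_, rfl⟩
  have hδ0 : 0 < δ := by linarith
  let A : Set X := {x | g x0 - l * f x0 ≤ g x - l * f x}
  have hA : IsClosed A := isClosed_le (by fun_prop) (by fun_prop)
  have hAy : ∀ x ∈ A, δ ≤ g x - g y := by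
    intro x hx
    have hx : g x0 - l * f x0 ≤ g x - l * f x := hx
    have := mul_le_mul_of_nonneg_left (hm x) (by linarith : 0 ≤ l)
    linarith
  obtain ⟨p, hpA, hp⟩ := ekeland_mul A hA x0 y (le_refl (g x0 - l * f x0))
    (fun x => Real.exp (l * f x / δ)) (by fun_prop) (Real.exp (l * m / δ)) (Real.exp_pos _)
    (fun x => Real.exp_le_exp.2 (by have := hm x; gcongr))
  have hpy := hAy p hpA
  obtain ⟨z, hzp, hz1, hz2⟩ := combined_step f g hg hgc p y (h p) l hl (by linarith)
  have hpne : p ≠ y := by rintro rfl; linarith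
  have hd : 0 < dist p y := dist_pos.2 hpne
  apply hzp
  apply hp z
  · have hpA : g x0 - l * f x0 ≤ g p - l * f p := hpA
    change g x0 - l * f x0 ≤ g z - l * f z
    linarith
  · have h1 : dist p z / dist p y ≤ l * f p / δ - l * f z / δ := by
      rw [← sub_div, div_le_div_iff₀ hd hδ0]
      rw [div_mul_eq_mul_div, div_le_iff₀ hd] at hz2
      have := mul_le_mul_of_nonneg_right hpy (dist_nonneg (x := p) (y := z))
      linarith
    have h2 : 1 + dist p z / dist p y ≤ Real.exp (l * f p / δ - l * f z / δ) := by
      have := Real.add_one_le_exp (l * f p / δ - l * f z / δ)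
      linarith
    have h3 : Real.exp (l * f p / δ) =
        Real.exp (l * f z / δ) * Real.exp (l * f p / δ - l * f z / δ) := by
      rw [← Real.exp_add]; congr 1; ring
    have h4 : dist p y + dist p z = (1 + dist p z / dist p y) * dist p y := by
      field_simp
    rw [h3, h4, mul_assoc]
    gcongr

lemma main_ineq' {X : Type*} [NormedAddCommGroup X] [NormedSpace ℝ X] [CompleteSpace X]
    (f g : X → ℝ) (hg : ConvexOn ℝ Set.univ g) (hfc : Continuous f) (hgc : Continuous g)
    (hf_bdd : BddBelow (Set.range f))
    (h : ∀ x : X, metricSlope f x = metricSlope g x) (x : X) :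
    g x - (⨅ y, g y) ≤ f x - ⨅ y, f y := by
  have key : ∀ y, g x - g y ≤ f x - ⨅ y, f y := by
    intro y
    have hlim : Tendsto (fun l : ℝ => l * (f x - ⨅ y, f y)) (𝓝[>] 1)
        (𝓝 (1 * (f x - ⨅ y, f y))) :=
      (tendsto_id.mul_const _).mono_left nhdsWithin_le_nhds
    rw [one_mul] at hlim
    refine ge_of_tendsto hlim ?_
    filter_upwards [self_mem_nhdsWithin] with l hl
    exact main_ineq f g hg hfc hgc h _ (fun x => ciInf_le hf_bdd x) l hl x y
  have : g x - (f x - ⨅ y, f y) ≤ ⨅ y, g y :=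
    le_ciInf fun y => by have := key y; linarith
  linarith

/-- Slope determination, convex case: two convex continuous functions on a Banach space,
bounded from below, with equal metric slopes, coincide up to an additive constant. -/
theorem determination_convex {X : Type*}
    [NormedAddCommGroup X] [NormedSpace ℝ X] [CompleteSpace X]
    (f g : X → ℝ)
    (hf_cvx : ConvexOn ℝ Set.univ f) (hg_cvx : ConvexOn ℝ Set.univ g)
    (hf_cont : Continuous f) (hg_cont : Continuous g)
    (hf_bdd : BddBelow (Set.range f)) (hg_bdd : BddBelow (Set.range g))
    (h : ∀ x : X, metricSlope f x = metricSlope g x) :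
    ∃ c : ℝ, ∀ x : X, f x = g x + c := by
  refine ⟨(⨅ y, f y) - ⨅ y, g y, fun x => ?_⟩
  have h1 := main_ineq' f g hg_cvx hf_cont hg_cont hf_bdd h x
  have h2 := main_ineq' g f hf_cvx hg_cont hf_cont hg_bdd (fun x => (h x).symm) x
  linarith
end

section
/- Consider f, g : ℝ → ℝ given by f(t) = arctan(t) and g(t) = −arctan(t). Then for every t ∈ ℝ the metric slopes satisfy |∇f|(t) = |∇g|(t) = 1/(t² + 1), both f and g are bounded, yet there is no constant c ∈ ℝ such that f(t) = g(t) + c for all t ∈ ℝ. -/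
open Filter Topology
open scoped ENNReal Classical

theorem metricSlope_of_hasDerivAt {f : ℝ → ℝ} {f' x : ℝ} (h : HasDerivAt f f' x) :
    metricSlope f x = ENNReal.ofReal |f'| := by
  have hne : 𝓝[≠] x ≠ ⊥ := NeBot.ne inferInstance
  have hs := hasDerivAt_iff_tendsto_slope.mp h
  have hl : Tendsto (slope f x) (𝓝[<] x) (𝓝 f') :=
    hs.mono_left (nhdsWithin_mono _ fun y hy => ne_of_lt hy)
  have hr : Tendsto (slope f x) (𝓝[>] x) (𝓝 f') :=
    hs.mono_left (nhdsWithin_mono _ fun y hy => ne_of_gt hy)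
  have h1 : Tendsto (fun y => ENNReal.ofReal (max (f x - f y) 0 / dist x y)) (𝓝[<] x)
      (𝓝 (ENNReal.ofReal (max f' 0))) := by
    refine (ENNReal.tendsto_ofReal (hl.max tendsto_const_nhds)).congr' ?_
    filter_upwards [self_mem_nhdsWithin] with y hy
    have hy' : 0 < x - y := sub_pos.mpr hy
    rw [Real.dist_eq, abs_of_pos hy', ← max_div_div_right hy'.le, zero_div, slope_def_field,
      ← neg_sub (f x), ← neg_sub x y, neg_div_neg_eq]
  have h2 : Tendsto (fun y => ENNReal.ofReal (max (f x - f y) 0 / dist x y)) (𝓝[>] x)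
      (𝓝 (ENNReal.ofReal (max (-f') 0))) := by
    refine (ENNReal.tendsto_ofReal (hr.neg.max tendsto_const_nhds)).congr' ?_
    filter_upwards [self_mem_nhdsWithin] with y hy
    have hy' : 0 < y - x := sub_pos.mpr hy
    rw [Real.dist_eq, abs_sub_comm, abs_of_pos hy', ← max_div_div_right hy'.le, zero_div,
      slope_def_field, ← neg_div, neg_sub]
  rw [metricSlope, if_neg hne, ← nhdsLT_sup_nhdsGT x, limsup_sup_filter, h1.limsup_eq,
    h2.limsup_eq, ← ENNReal.ofReal_max]
  congr 1
  rcases le_total 0 f' with h0 | h0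
  · rw [abs_of_nonneg h0, max_eq_left h0, max_eq_right (by linarith : -f' ≤ 0), max_eq_left h0]
  · rw [abs_of_nonpos h0, max_eq_right h0, max_eq_left (by linarith : 0 ≤ -f'),
      max_eq_right (by linarith)]

/-- The functions `f = arctan` and `g = -arctan` have the same slope `1/(t²+1)`
at every point and are bounded, yet they do not differ by a constant. -/
theorem arctan_counterexample :
    (∀ t : ℝ, metricSlope Real.arctan t = ENNReal.ofReal (1 / (t ^ 2 + 1)) ∧
      metricSlope (fun s : ℝ => -Real.arctan s) t = ENNReal.ofReal (1 / (t ^ 2 + 1))) ∧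
    (∃ C : ℝ, ∀ t : ℝ, |Real.arctan t| ≤ C) ∧
    (∃ C : ℝ, ∀ t : ℝ, |(-Real.arctan t)| ≤ C) ∧
    ¬∃ c : ℝ, ∀ t : ℝ, Real.arctan t = -Real.arctan t + c := by
  have hb : ∀ t : ℝ, |Real.arctan t| ≤ Real.pi / 2 := fun t =>
    abs_le.mpr ⟨(Real.neg_pi_div_two_lt_arctan t).le, (Real.arctan_lt_pi_div_two t).le⟩
  refine ⟨fun t => ?_, ⟨_, hb⟩, ⟨Real.pi / 2, fun t => by rw [abs_neg]; exact hb t⟩, ?_⟩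
  · have hp : (0 : ℝ) ≤ 1 / (t ^ 2 + 1) := by positivity
    have h := Real.hasDerivAt_arctan t
    rw [add_comm (1 : ℝ)] at h
    constructor
    · rw [metricSlope_of_hasDerivAt h, abs_of_nonneg hp]
    · rw [metricSlope_of_hasDerivAt h.fun_neg, abs_neg, abs_of_nonneg hp]
  · rintro ⟨c, hc⟩
    have h0 := hc 0
    have h1 := hc 1
    rw [Real.arctan_zero] at h0
    rw [Real.arctan_one] at h1
    linarith [Real.pi_pos]
end

section
/- There exist two continuous functions f, g : [0,1] → ℝ such that: all sublevel sets [f ≤ α] and [g ≤ α] are compact; |∇f|(t) = |∇g|(t) for every t ∈ [0,1], with |∇f|(t) ∈ {1, +∞} for all t ∈ (0,1] and |∇f|(0) = |∇g|(0) = 0; Crit(f) = Crit(g) = {0}; f(0) = g(0) = 0; and yet there is no constant c ∈ ℝ such that f(t) = g(t) + c for all t ∈ [0,1]. (Such functions are f(t) = 𝔠(t) + t and g(t) = 2𝔠(t) + t, where 𝔠 : [0,1] → [0,1] is the Cantor staircase function.) -/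
open Filter Topology
open scoped ENNReal Classical

/-- Approximations of the Cantor staircase, defined on all of `ℝ`. -/
noncomputable def stair : ℕ → ℝ → ℝ
  | 0, x => max 0 (min x 1)
  | n + 1, x => (stair n (3 * x) + stair n (3 * x - 2)) / 2

lemma stair_zero_left (n : ℕ) : ∀ x : ℝ, x ≤ 0 → stair n x = 0 := by
  induction n with
  | zero =>
    intro x hx
    simp only [stair]
    rw [min_eq_left (by linarith), max_eq_left hx]
  | succ n ih =>
    intro x hx
    simp only [stair]
    rw [ih _ (by linarith), ih _ (by linarith)]; norm_num

lemma stair_one_right (n : ℕ) : ∀ x : ℝ, 1 ≤ x → stair n x = 1 := by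
  induction n with
  | zero =>
    intro x hx
    simp only [stair]
    rw [min_eq_right hx, max_eq_right (by norm_num)]
  | succ n ih =>
    intro x hx
    simp only [stair]
    rw [ih _ (by linarith), ih _ (by linarith)]; norm_num

lemma stair_mono (n : ℕ) : Monotone (stair n) := by
  induction n with
  | zero =>
    intro x y h
    simp only [stair]
    gcongr
  | succ n ih =>
    intro x y h
    simp only [stair]
    have h1 : stair n (3 * x) ≤ stair n (3 * y) := ih (by linarith)
    have h2 : stair n (3 * x - 2) ≤ stair n (3 * y - 2) := ih (by linarith)
    linarith

lemma stair_cont (n : ℕ) : Continuous (stair n) := by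
  induction n with
  | zero =>
    have : stair 0 = fun x : ℝ => max 0 (min x 1) := by funext x; simp only [stair]
    rw [this]; fun_prop
  | succ n ih =>
    have : stair (n + 1) = fun x : ℝ => (stair n (3 * x) + stair n (3 * x - 2)) / 2 := by
      funext x; simp only [stair]
    rw [this]; fun_prop

lemma stair_mem (n : ℕ) (x : ℝ) : 0 ≤ stair n x ∧ stair n x ≤ 1 := by
  constructor
  · rw [← stair_zero_left n (min x 0) (min_le_right _ _)]
    exact stair_mono n (min_le_left _ _)
  · rw [← stair_one_right n (max x 1) (le_max_right _ _)]
    exact stair_mono n (le_max_left _ _)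

lemma stair_step (n : ℕ) : ∀ x : ℝ, |stair n x - stair (n + 1) x| ≤ 2 / 2 / 2 ^ n := by
  induction n with
  | zero =>
    intro x
    have h1 := stair_mem 0 x
    have h2 := stair_mem 1 x
    rw [abs_le]; constructor <;> norm_num <;> linarith [h1.1, h1.2, h2.1, h2.2]
  | succ n ih =>
    intro x
    have e : ∀ m, stair (m + 1) x = (stair m (3 * x) + stair m (3 * x - 2)) / 2 := by
      intro m; simp only [stair]
    rw [e (n + 1), e n]
    have hp : (2 : ℝ) / 2 / 2 ^ (n + 1) = (2 / 2 / 2 ^ n) / 2 := by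
      rw [pow_succ]; field_simp
    rw [hp]
    rcases le_total x (1 / 2) with hx | hx
    · rw [stair_zero_left n (3 * x - 2) (by linarith),
        stair_zero_left (n + 1) (3 * x - 2) (by linarith)]
      have := abs_le.1 (ih (3 * x))
      rw [abs_le]; constructor <;> linarith [this.1, this.2]
    · rw [stair_one_right n (3 * x) (by linarith),
        stair_one_right (n + 1) (3 * x) (by linarith)]
      have := abs_le.1 (ih (3 * x - 2))
      rw [abs_le]; constructor <;> linarith [this.1, this.2]

lemma exists_cantor : ∃ c : ℝ → ℝ, Continuous c ∧ Monotone c ∧ (∀ x, x ≤ 0 → c x = 0) ∧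
    (∀ x, 1 ≤ x → c x = 1) ∧ ∀ x, c x = (c (3 * x) + c (3 * x - 2)) / 2 := by
  have hd : ∀ x n, dist (stair n x) (stair (n + 1) x) ≤ 2 / 2 / 2 ^ n := by
    intro x n; rw [Real.dist_eq]; exact stair_step n x
  have hc : ∀ x, ∃ l, Tendsto (fun n => stair n x) atTop (𝓝 l) := fun x =>
    cauchySeq_tendsto_of_complete (cauchySeq_of_le_geometric_two (hd x))
  choose c hc using hc
  refine ⟨c, ?_, ?_, ?_, ?_, ?_⟩
  · have hu : TendstoUniformly stair c atTop := by
      rw [Metric.tendstoUniformly_iff]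
      intro ε hε
      have h0 : Tendsto (fun n : ℕ => (2 : ℝ) * (1 / 2) ^ n) atTop (𝓝 (2 * 0)) :=
        (tendsto_pow_atTop_nhds_zero_of_lt_one (by norm_num) (by norm_num)).const_mul 2
      rw [mul_zero] at h0
      filter_upwards [h0.eventually (gt_mem_nhds hε)] with n hn x
      have := dist_le_of_le_geometric_two_of_tendsto (hd x) (hc x) n
      rw [dist_comm]
      refine lt_of_le_of_lt this ?_
      rw [one_div, inv_pow, ← div_eq_mul_inv] at hn
      exact hn
    exact hu.continuous (Frequently.of_forall stair_cont)
  · intro x y h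
    exact le_of_tendsto_of_tendsto' (hc x) (hc y) (fun n => stair_mono n h)
  · intro x hx
    refine tendsto_nhds_unique (hc x) ?_
    simp only [stair_zero_left _ x hx]; exact tendsto_const_nhds
  · intro x hx
    refine tendsto_nhds_unique (hc x) ?_
    simp only [stair_one_right _ x hx]; exact tendsto_const_nhds
  · intro x
    refine tendsto_nhds_unique ((tendsto_add_atTop_iff_nat 1).2 (hc x)) ?_
    simp only [stair]
    exact ((hc _).add (hc _)).div_const 2

lemma cantor_half {c : ℝ → ℝ} (hm : Monotone c) (h0 : ∀ x, x ≤ 0 → c x = 0)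
    (h1 : ∀ x, 1 ≤ x → c x = 1) (he : ∀ x, c x = (c (3 * x) + c (3 * x - 2)) / 2)
    (n : ℕ) : ∀ x : ℝ, 0 ≤ x → x ≤ 1 → x / 2 - (1 / 2) ^ n ≤ c x := by
  induction n with
  | zero =>
    intro x hx hx1
    have : c 0 ≤ c x := hm hx
    rw [h0 0 le_rfl] at this
    norm_num; linarith
  | succ n ih =>
    intro x hx hx1
    have hp : (0 : ℝ) < (1 / 2) ^ n := by positivity
    have hn : ∀ y, 0 ≤ c y := fun y => by
      rw [← h0 (min y 0) (min_le_right _ _)]; exact hm (min_le_left _ _)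
    rw [pow_succ, he x]
    rcases le_total (3 * x) 1 with h | h
    · have := ih (3 * x) (by linarith) h
      have := hn (3 * x - 2)
      linarith
    · rw [h1 _ h]
      have := hn (3 * x - 2)
      linarith

lemma cantor_dich {c : ℝ → ℝ} (hm : Monotone c) (h0 : ∀ x, x ≤ 0 → c x = 0)
    (h1 : ∀ x, 1 ≤ x → c x = 1) (he : ∀ x, c x = (c (3 * x) + c (3 * x - 2)) / 2)
    (n : ℕ) : ∀ t : ℝ, 0 < t → t ≤ 1 →
      (∃ s < t, ∀ y, s < y → y ≤ t → c y = c t) ∨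
      (∃ y, 0 ≤ y ∧ y < t ∧ t - y ≤ (1 / 3) ^ n ∧
        (3 / 2) ^ n / 2 * (t - y) ≤ c t - c y) := by
  induction n with
  | zero =>
    intro t ht ht1
    refine Or.inr ⟨0, le_rfl, ht, by simpa using ht1, ?_⟩
    rw [h0 0 le_rfl]
    have : t / 2 ≤ c t := by
      have hl : Tendsto (fun n : ℕ => t / 2 - (1 / 2 : ℝ) ^ n) atTop (𝓝 (t / 2 - 0)) :=
        (tendsto_pow_atTop_nhds_zero_of_lt_one (by norm_num) (by norm_num)).const_sub _
      rw [sub_zero] at hl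
      exact le_of_tendsto' hl (fun n => cantor_half hm h0 h1 he n t ht.le ht1)
    simp only [pow_zero]; linarith
  | succ n ih =>
    intro t ht ht1
    rcases le_or_gt (3 * t) 1 with h | h
    · have e : ∀ y, y ≤ t → c y = c (3 * y) / 2 := fun y hy => by
        rw [he y, h0 (3 * y - 2) (by linarith), add_zero]
      rcases ih (3 * t) (by linarith) h with ⟨s, hs, H⟩ | ⟨y, hy0, hyt, hyd, H⟩
      · refine Or.inl ⟨s / 3, by linarith, fun y hy hyt => ?_⟩
        rw [e y hyt, e t le_rfl, H (3 * y) (by linarith) (by linarith)]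
      · refine Or.inr ⟨y / 3, by linarith, by linarith, ?_, ?_⟩
        · rw [pow_succ]; linarith
        · rw [e (y / 3) (by linarith), e t le_rfl, pow_succ, mul_div_cancel₀ y (by norm_num)]
          linarith
    · rcases le_or_gt (3 * t) 2 with h' | h'
      · refine Or.inl ⟨1 / 3, by linarith, fun y hy hyt => ?_⟩
        rw [he y, he t, h1 (3 * y) (by linarith), h1 (3 * t) (by linarith),
          h0 (3 * y - 2) (by linarith), h0 (3 * t - 2) (by linarith)]
      · have e : ∀ y, 2 / 3 ≤ y → c y = (1 + c (3 * y - 2)) / 2 := fun y hy => by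
          rw [he y, h1 (3 * y) (by linarith)]
        rcases ih (3 * t - 2) (by linarith) (by linarith) with
          ⟨s, hs, H⟩ | ⟨y, hy0, hyt, hyd, H⟩
        · refine Or.inl ⟨max ((s + 2) / 3) (2 / 3), max_lt (by linarith) (by linarith),
            fun y hy hyt => ?_⟩
          have := (max_lt_iff.1 hy)
          rw [e y (by linarith), e t (by linarith), H (3 * y - 2) (by linarith) (by linarith)]
        · refine Or.inr ⟨(y + 2) / 3, by linarith, by linarith, ?_, ?_⟩
          · rw [pow_succ]; linarith
          · rw [e ((y + 2) / 3) (by linarith), e t (by linarith), pow_succ,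
              mul_div_cancel₀ (y + 2) (by norm_num), add_sub_cancel_right]
            linarith

lemma metricSlope_eq {M : Type*} [MetricSpace M] (f : M → ℝ) (x : M) : metricSlope f x =
    Filter.limsup (fun y => ENNReal.ofReal (max (f x - f y) 0 / dist x y)) (𝓝[≠] x) := by
  unfold metricSlope
  split_ifs with h
  · rw [h]; simp
  · rfl

lemma le_slope {M : Type*} [MetricSpace M] (f : M → ℝ) (x : M) (m : ℝ)
    (h : ∀ ε > 0, ∃ y, y ≠ x ∧ dist y x < ε ∧ m * dist x y ≤ f x - f y) :
    ENNReal.ofReal m ≤ metricSlope f x := by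
  rw [metricSlope_eq]
  refine le_limsup_of_frequently_le ?_
  rw [Filter.Frequently, Metric.nhdsWithin_basis_ball.eventually_iff]
  rintro ⟨ε, hε, H⟩
  obtain ⟨y, hy, hd, hl⟩ := h ε hε
  refine H ⟨hd, hy⟩ (ENNReal.ofReal_le_ofReal ?_)
  rw [le_div_iff₀ (dist_pos.2 hy.symm)]
  exact hl.trans (le_max_left _ _)

lemma slope_le {M : Type*} [MetricSpace M] (f : M → ℝ) (x : M) (m : ℝ) (hm : 0 ≤ m)
    (h : ∃ ε > 0, ∀ y, dist y x < ε → f x - f y ≤ m * dist x y) :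
    metricSlope f x ≤ ENNReal.ofReal m := by
  rw [metricSlope_eq]
  refine limsup_le_of_le (h := ?_)
  obtain ⟨ε, hε, h⟩ := h
  rw [Metric.nhdsWithin_basis_ball.eventually_iff]
  refine ⟨ε, hε, fun y hy => ENNReal.ofReal_le_ofReal ?_⟩
  rw [div_le_iff₀ (dist_pos.2 (Ne.symm hy.2))]
  exact max_le (h y hy.1) (mul_nonneg hm dist_nonneg)

lemma slope_zero {c : ℝ → ℝ} (hm : Monotone c) (k : ℝ) (hk : 0 ≤ k)
    (t : Set.Icc (0 : ℝ) 1) (ht : (t : ℝ) = 0) :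
    metricSlope (fun x : Set.Icc (0 : ℝ) 1 => k * c x + x) t = 0 := by
  have := slope_le (fun x : Set.Icc (0 : ℝ) 1 => k * c x + x) t 0 le_rfl
    ⟨1, one_pos, fun y _ => by
      have h : (t : ℝ) ≤ y := by rw [ht]; exact y.2.1
      have := mul_le_mul_of_nonneg_left (hm h) hk
      simp only [zero_mul]; linarith⟩
  simpa using this

lemma slope_one {c : ℝ → ℝ} (hm : Monotone c) (k : ℝ) (hk : 0 ≤ k)
    (t : Set.Icc (0 : ℝ) 1) (ht : 0 < (t : ℝ))
    (h : ∃ s < (t : ℝ), ∀ y, s < y → y ≤ t → c y = c t) :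
    metricSlope (fun x : Set.Icc (0 : ℝ) 1 => k * c x + x) t = 1 := by
  rw [← ENNReal.ofReal_one]
  apply le_antisymm
  · apply slope_le _ _ _ zero_le_one
    obtain ⟨s, hs, H⟩ := h
    refine ⟨t - s, by linarith, fun y hy => ?_⟩
    rw [Subtype.dist_eq, Real.dist_eq] at hy ⊢
    have hy' := abs_lt.1 hy
    rcases le_total (y : ℝ) t with h | h
    · rw [H y (by linarith [hy'.1]) h, abs_of_nonneg (by linarith)]; linarith
    · have := mul_le_mul_of_nonneg_left (hm h) hk
      have := abs_nonneg ((t : ℝ) - y)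
      linarith
  · apply le_slope
    intro ε hε
    have hl : max 0 (t - ε / 2) < (t : ℝ) := max_lt ht (by linarith)
    have hr : (t : ℝ) - ε / 2 ≤ max 0 (t - ε / 2) := le_max_right _ _
    refine ⟨⟨max 0 (t - ε / 2), le_max_left _ _, hl.le.trans t.2.2⟩, ?_, ?_, ?_⟩
    · intro h; exact hl.ne (congrArg Subtype.val h)
    · rw [Subtype.dist_eq, Real.dist_eq, abs_lt]
      constructor <;> dsimp only <;> linarith
    · rw [Subtype.dist_eq, Real.dist_eq, abs_of_nonneg (by dsimp only; linarith)]
      have := mul_le_mul_of_nonneg_left (hm hl.le) hk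
      dsimp only; linarith

lemma slope_top {c : ℝ → ℝ} (k : ℝ) (hk : 1 ≤ k)
    (t : Set.Icc (0 : ℝ) 1)
    (h : ∀ n : ℕ, ∃ y, 0 ≤ y ∧ y < (t : ℝ) ∧ t - y ≤ (1 / 3) ^ n ∧
        (3 / 2) ^ n / 2 * (t - y) ≤ c t - c y) :
    metricSlope (fun x : Set.Icc (0 : ℝ) 1 => k * c x + x) t = ⊤ := by
  refine ENNReal.eq_top_of_forall_nnreal_le ?_
  intro r
  rw [← ENNReal.ofReal_coe_nnreal]
  apply le_slope
  intro ε hε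
  have hA : ∀ᶠ n : ℕ in atTop, (1 / 3 : ℝ) ^ n < ε :=
    (tendsto_pow_atTop_nhds_zero_of_lt_one (by norm_num) (by norm_num)).eventually
      (gt_mem_nhds hε)
  have hB : ∀ᶠ n : ℕ in atTop, 2 * (r : ℝ) ≤ (3 / 2 : ℝ) ^ n :=
    (tendsto_pow_atTop_atTop_of_one_lt (by norm_num)).eventually_ge_atTop _
  obtain ⟨n, hnA, hnB⟩ := (hA.and hB).exists
  obtain ⟨y, hy0, hyt, hyd, H⟩ := h n
  refine ⟨⟨y, hy0, hyt.le.trans t.2.2⟩, ?_, ?_, ?_⟩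
  · intro h; rw [← h] at hyt; exact lt_irrefl _ hyt
  · rw [Subtype.dist_eq, Real.dist_eq, abs_lt]
    constructor <;> dsimp only <;> linarith
  · rw [Subtype.dist_eq, Real.dist_eq, abs_of_nonneg (by dsimp only; linarith)]
    dsimp only
    have h1 : (r : ℝ) * (t - y) ≤ (3 / 2) ^ n / 2 * (t - y) :=
      mul_le_mul_of_nonneg_right (by linarith) (by linarith)
    have h2 : 0 ≤ (r : ℝ) * (t - y) := mul_nonneg r.2 (by linarith)
    have h3 : 1 * (c t - c y) ≤ k * (c t - c y) :=
      mul_le_mul_of_nonneg_right hk (by linarith)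
    linarith

/-- Cantor-staircase counterexample: there are continuous functions `f, g` on `[0,1]` with
compact sublevel sets, the same slope everywhere (`∈ {1, +∞}` on `(0,1]`, `0` at `0`),
`Crit f = Crit g = {0}`, `f(0) = g(0) = 0`, which do not differ by a constant. -/
theorem cantor_counterexample :
    ∃ f g : Set.Icc (0 : ℝ) 1 → ℝ,
      Continuous f ∧ Continuous g ∧
      (∀ α : ℝ, IsCompact {x : Set.Icc (0 : ℝ) 1 | f x ≤ α}) ∧
      (∀ α : ℝ, IsCompact {x : Set.Icc (0 : ℝ) 1 | g x ≤ α}) ∧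
      (∀ t : Set.Icc (0 : ℝ) 1, metricSlope f t = metricSlope g t) ∧
      (∀ t : Set.Icc (0 : ℝ) 1, (t : ℝ) ≠ 0 →
        metricSlope f t = 1 ∨ metricSlope f t = ⊤) ∧
      (∀ t : Set.Icc (0 : ℝ) 1, (t : ℝ) = 0 → metricSlope f t = 0 ∧ metricSlope g t = 0) ∧
      {x : Set.Icc (0 : ℝ) 1 | metricSlope f x = 0} = {x : Set.Icc (0 : ℝ) 1 | (x : ℝ) = 0} ∧
      {x : Set.Icc (0 : ℝ) 1 | metricSlope g x = 0} = {x : Set.Icc (0 : ℝ) 1 | (x : ℝ) = 0} ∧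
      (∀ t : Set.Icc (0 : ℝ) 1, (t : ℝ) = 0 → f t = 0 ∧ g t = 0) ∧
      ¬∃ c : ℝ, ∀ t : Set.Icc (0 : ℝ) 1, f t = g t + c := by
  obtain ⟨c, hcont, hm, h0, h1, he⟩ := exists_cantor
  have key : ∀ t : Set.Icc (0 : ℝ) 1, (t : ℝ) ≠ 0 →
      (∀ k : ℝ, 1 ≤ k → metricSlope (fun x : Set.Icc (0 : ℝ) 1 => k * c x + x) t = 1) ∨
      (∀ k : ℝ, 1 ≤ k → metricSlope (fun x : Set.Icc (0 : ℝ) 1 => k * c x + x) t = ⊤) := by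
    intro t ht
    have htp : 0 < (t : ℝ) := lt_of_le_of_ne t.2.1 (Ne.symm ht)
    by_cases h : ∃ s < (t : ℝ), ∀ y, s < y → y ≤ t → c y = c t
    · exact Or.inl fun k hk => slope_one hm k (by linarith) t htp h
    · exact Or.inr fun k hk => slope_top k hk t fun n =>
        (cantor_dich hm h0 h1 he n t htp t.2.2).resolve_left h
  have hz : ∀ k : ℝ, 1 ≤ k → ∀ t : Set.Icc (0 : ℝ) 1, (t : ℝ) = 0 →
      metricSlope (fun x : Set.Icc (0 : ℝ) 1 => k * c x + x) t = 0 :=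
    fun k hk t ht => slope_zero hm k (by linarith) t ht
  have hcrit : ∀ k : ℝ, 1 ≤ k → {x : Set.Icc (0 : ℝ) 1 |
      metricSlope (fun x : Set.Icc (0 : ℝ) 1 => k * c x + x) x = 0} =
        {x : Set.Icc (0 : ℝ) 1 | (x : ℝ) = 0} := by
    intro k hk
    ext t
    simp only [Set.mem_setOf_eq]
    refine ⟨fun h => ?_, hz k hk t⟩
    by_contra ht
    rcases key t ht with h' | h' <;> simp [h' k hk] at h
  have hC : ∀ k : ℝ, Continuous (fun x : Set.Icc (0 : ℝ) 1 => k * c x + x) := by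
    intro k; fun_prop
  have hK : ∀ k α : ℝ, IsCompact {x : Set.Icc (0 : ℝ) 1 | k * c x + x ≤ α} := fun k α =>
    (isClosed_le (hC k) continuous_const).isCompact
  refine ⟨fun x => 1 * c x + x, fun x => 2 * c x + x, hC 1, hC 2, hK 1, hK 2, ?_, ?_, ?_,
    hcrit 1 le_rfl, hcrit 2 one_le_two, ?_, ?_⟩
  · intro t
    by_cases ht : (t : ℝ) = 0
    · rw [hz 1 le_rfl t ht, hz 2 one_le_two t ht]
    · rcases key t ht with h | h <;> rw [h 1 le_rfl, h 2 one_le_two]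
  · intro t ht
    exact (key t ht).imp (fun h => h 1 le_rfl) (fun h => h 1 le_rfl)
  · exact fun t ht => ⟨hz 1 le_rfl t ht, hz 2 one_le_two t ht⟩
  · intro t ht
    simp [ht, h0 0 le_rfl]
  · rintro ⟨d, hd⟩
    have a := hd ⟨0, by simp⟩
    have b := hd ⟨1, by simp⟩
    simp only [h0 0 le_rfl, h1 1 le_rfl] at a b
    linarith
end

section
/- Consider the linear functions f, g : ℝ → ℝ given by f(t) = t and g(t) = −t. Then f and g are convex and continuous, |∇f|(t) = |∇g|(t) = 1 for every t ∈ ℝ, yet there is no constant c ∈ ℝ such that f(t) = g(t) + c for all t ∈ ℝ. (Hence boundedness from below cannot be dropped in the slope determination theorem for convex functions.) -/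
open Filter Topology
open scoped ENNReal Classical

theorem metricSlope_eq_one_aux (f : ℝ → ℝ) (t : ℝ) (h1 : ∀ y, f t - f y ≤ dist t y)
    (h2 : ∃ᶠ y in 𝓝[≠] t, f t - f y = dist t y) : metricSlope f t = 1 := by
  unfold metricSlope
  rw [if_neg (NeBot.ne inferInstance)]
  apply le_antisymm
  · apply Filter.limsup_le_of_le
    · isBoundedDefault
    · filter_upwards with y
      rw [← ENNReal.ofReal_one]
      apply ENNReal.ofReal_le_ofReal
      exact div_le_one_of_le₀ (max_le (h1 y) dist_nonneg) dist_nonneg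
  · apply Filter.le_limsup_of_frequently_le
    · refine (h2.and_eventually self_mem_nhdsWithin).mono ?_
      rintro y ⟨hy, hne⟩
      have hpos : 0 < dist t y := dist_pos.2 (Ne.symm hne)
      rw [hy, max_eq_left hpos.le, div_self hpos.ne']
      simp
    · isBoundedDefault

/-- The linear functions `f(t) = t` and `g(t) = -t` are convex and continuous with slope
identically `1`, yet they do not differ by a constant (boundedness from below is needed
in the convex determination theorem). -/
theorem linear_counterexample :
    ConvexOn ℝ Set.univ (fun t : ℝ => t) ∧ ConvexOn ℝ Set.univ (fun t : ℝ => -t) ∧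
    Continuous (fun t : ℝ => t) ∧ Continuous (fun t : ℝ => -t) ∧
    (∀ t : ℝ, metricSlope (fun s : ℝ => s) t = 1 ∧ metricSlope (fun s : ℝ => -s) t = 1) ∧
    ¬∃ c : ℝ, ∀ t : ℝ, t = -t + c := by
  refine ⟨convexOn_id convex_univ, (concaveOn_id convex_univ).neg, continuous_id,
    continuous_neg, fun t => ⟨?_, ?_⟩, ?_⟩
  · apply metricSlope_eq_one_aux
    · intro y
      exact le_abs_self _
    · have h : ∃ᶠ y in 𝓝[<] t, t - y = dist t y := by
        apply Eventually.frequently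
        filter_upwards [self_mem_nhdsWithin] with y hy
        rw [Real.dist_eq, abs_of_pos (sub_pos.2 hy)]
      exact h.filter_mono (nhdsWithin_mono t fun y hy => ne_of_lt hy)
  · apply metricSlope_eq_one_aux
    · intro y
      rw [Real.dist_eq]
      have := neg_le_abs (t - y)
      linarith
    · have h : ∃ᶠ y in 𝓝[>] t, -t - -y = dist t y := by
        apply Eventually.frequently
        filter_upwards [self_mem_nhdsWithin] with y hy
        rw [Real.dist_eq, abs_of_neg (sub_neg.2 hy)]
        ring
      exact h.filter_mono (nhdsWithin_mono t fun y hy => ne_of_gt hy)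
  · rintro ⟨c, hc⟩
    have h0 := hc 0
    have h1 := hc 1
    linarith
end
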